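/- Let X₁,…,X_T be vectors in ℝ^d with ‖X_t‖₂ ≤ 1, let λ > 0, and define Γ₁ := λI and Γ_t := Γ_{t−1} + X_{t−1}X_{t−1}ᵀ for t ≥ 2. Then Σ_{t=1}^T √(tr(Γ_t⁻¹ X_t X_tᵀ)) ≤ √(T·d·(1 + 1/λ)·log(1 + T/(dλ))). -/

import Mathlib

open Matrix Finset

/-!
Adding `x xᵀ` to `Γ t` multiplies its determinant by `1 + xᵀ (Γ t)⁻¹ x`, so the product of these
factors over all rounds is `det (Γ T) / λ ^ d`. By AM-GM on eigenvalues, `det (Γ T)` is at most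
`(tr (Γ T) / d) ^ d`, and the trace grows by at most `1` per round. Since `Γ t ≥ λ I`, each term
`y = xᵀ (Γ t)⁻¹ x` is at most `1 / λ`, and hence at most `(1 + 1 / λ) log (1 + y)`. So the sum of
the terms is at most `(1 + 1 / λ) log (det (Γ T) / λ ^ d)`; Cauchy-Schwarz passes to their square
roots.
-/

section RealInequalities

theorem le_one_add_mul_log_one_add {y b : ℝ} (hy : 0 ≤ y) (hyb : y ≤ b) :
    y ≤ (1 + b) * Real.log (1 + y) := by
  have hpos : 0 < 1 + y := by linarith
  have hlog : 0 ≤ Real.log (1 + y) := Real.log_nonneg (by linarith)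
  calc y = (1 + y) * (1 - (1 + y)⁻¹) := by field_simp; ring
    _ ≤ (1 + y) * Real.log (1 + y) := by gcongr; exact Real.one_sub_inv_le_log_of_pos hpos
    _ ≤ (1 + b) * Real.log (1 + y) := by gcongr

variable {ι : Type*} {s : Finset ι} {y : ι → ℝ}

theorem sum_sqrt_le_sqrt_card_mul_sum (hy : ∀ i ∈ s, 0 ≤ y i) :
    ∑ i ∈ s, √(y i) ≤ √(#s * ∑ i ∈ s, y i) := by
  apply Real.le_sqrt_of_sq_le
  calc (∑ i ∈ s, √(y i)) ^ 2 ≤ #s * ∑ i ∈ s, √(y i) ^ 2 := sq_sum_le_card_mul_sum_sq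
    _ = #s * ∑ i ∈ s, y i := by rw [sum_congr rfl fun i hi => Real.sq_sqrt (hy i hi)]

theorem sum_le_one_add_mul_log_prod_one_add {b : ℝ} (hy : ∀ i ∈ s, 0 ≤ y i)
    (hyb : ∀ i ∈ s, y i ≤ b) :
    ∑ i ∈ s, y i ≤ (1 + b) * Real.log (∏ i ∈ s, (1 + y i)) := by
  rw [Real.log_prod fun i hi => (add_pos_of_pos_of_nonneg one_pos (hy i hi)).ne', mul_sum]
  exact sum_le_sum fun i hi => le_one_add_mul_log_one_add (hy i hi) (hyb i hi)

theorem prod_le_sum_div_card_pow [Fintype ι] [Nonempty ι] (hy : ∀ i, 0 ≤ y i) :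
    ∏ i, y i ≤ ((∑ i, y i) / Fintype.card ι) ^ Fintype.card ι := by
  have hamgm := Real.geom_mean_le_arith_mean univ (fun _ => 1) y (fun _ _ => zero_le_one)
    (by simp [Fintype.card_pos]) fun i _ => hy i
  simp only [Real.rpow_one, sum_const, card_univ, nsmul_eq_mul, mul_one, one_mul] at hamgm
  have hprod : 0 ≤ ∏ i, y i := prod_nonneg fun i _ => hy i
  calc ∏ i, y i = ((∏ i, y i) ^ (Fintype.card ι : ℝ)⁻¹) ^ Fintype.card ι :=
        (Real.rpow_inv_natCast_pow hprod Fintype.card_ne_zero).symm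
    _ ≤ _ := by gcongr

end RealInequalities

section MatrixAlgebra

variable {n R : Type*} [Fintype n]

theorem trace_mul_vecMulVec [CommSemiring R] (A : Matrix n n R) (x y : n → R) :
    (A * vecMulVec x y).trace = y ⬝ᵥ A *ᵥ x := by
  rw [mul_vecMulVec, trace_vecMulVec, dotProduct_comm]

theorem det_add_vecMulVec [DecidableEq n] [CommRing R] {A : Matrix n n R} (hA : IsUnit A.det)
    (x y : n → R) :
    (A + vecMulVec x y).det = A.det * (1 + y ⬝ᵥ A⁻¹ *ᵥ x) := by
  have hfactor : A + vecMulVec x y = A * (1 + vecMulVec (A⁻¹ *ᵥ x) y) := by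
    rw [Matrix.mul_add, Matrix.mul_one, mul_vecMulVec, mulVec_mulVec, mul_nonsing_inv A hA,
      one_mulVec]
  rw [hfactor, det_mul, vecMulVec_eq Unit, det_one_add_replicateCol_mul_replicateRow]

end MatrixAlgebra

section PositiveMatrices

open scoped ComplexOrder

variable {n : Type*} [Fintype n] [DecidableEq n]

-- Both differences are Schur complements of the block matrix `[[B, 1], [1, A⁻¹]]`.
theorem posSemidef_inv_sub_inv {K : Type*} [Field K] [PartialOrder K] [StarRing K]
    [StarOrderedRing K] {A B : Matrix n n K} (hA : A.PosDef)
    (hAB : (B - A).PosSemidef) : (A⁻¹ - B⁻¹).PosSemidef := by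
  have hB : B.PosDef := by simpa using hA.add_posSemidef hAB
  let _ : Invertible B := hB.isUnit.invertible
  let _ : Invertible A⁻¹ := hA.inv.isUnit.invertible
  have hA_inv_inv : A⁻¹⁻¹ = A := nonsing_inv_nonsing_inv A ((isUnit_iff_isUnit_det A).1 hA.isUnit)
  have hblock : (fromBlocks B 1 (1 : Matrix n n K)ᴴ A⁻¹).PosSemidef :=
    (PosDef.fromBlocks₂₂ B 1 hA.inv).2 (by simpa [hA_inv_inv] using hAB)
  simpa using (PosDef.fromBlocks₁₁ 1 A⁻¹ hB).1 hblock

variable {𝕜 : Type*} [RCLike 𝕜] {A : Matrix n n 𝕜}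

theorem re_det_le_re_trace_div_card_pow [Nonempty n] (hA : A.PosSemidef) :
    RCLike.re A.det ≤ (RCLike.re A.trace / Fintype.card n) ^ Fintype.card n := by
  have hdet : RCLike.re A.det = ∏ i, hA.1.eigenvalues i := by
    rw [hA.1.det_eq_prod_eigenvalues, ← RCLike.ofReal_prod, RCLike.ofReal_re]
  have htrace : RCLike.re A.trace = ∑ i, hA.1.eigenvalues i := by
    rw [hA.1.trace_eq_sum_eigenvalues, ← RCLike.ofReal_sum, RCLike.ofReal_re]
  rw [hdet, htrace]
  exact prod_le_sum_div_card_pow hA.eigenvalues_nonneg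

/-- The squared norm `‖x‖²_{A⁻¹}` of `x` in the metric given by `A⁻¹`, which is the summand of the
elliptical potential. The real part makes it a real number over `ℂ`; for Hermitian `A` the
imaginary part is zero. -/
noncomputable def invNormSq (A : Matrix n n 𝕜) (x : n → 𝕜) : ℝ :=
  RCLike.re (star x ⬝ᵥ A⁻¹ *ᵥ x)

theorem invNormSq_nonneg (hA : A.PosSemidef) (x : n → 𝕜) : 0 ≤ invNormSq A x :=
  hA.inv.re_dotProduct_nonneg x

theorem ofReal_invNormSq (hA : A.IsHermitian) (x : n → 𝕜) :
    (invNormSq A x : 𝕜) = star x ⬝ᵥ A⁻¹ *ᵥ x := by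
  have him := hA.inv.im_star_dotProduct_mulVec_self x
  exact RCLike.ext (by simp [invNormSq]) (by simp [him])

theorem invNormSq_anti {B : Matrix n n 𝕜} (hA : A.PosDef) (hAB : (B - A).PosSemidef)
    (x : n → 𝕜) : invNormSq B x ≤ invNormSq A x := by
  have h := (posSemidef_inv_sub_inv hA hAB).re_dotProduct_nonneg x
  rwa [sub_mulVec, dotProduct_sub, map_sub, sub_nonneg] at h

theorem invNormSq_smul_one {c : ℝ} (hc : c ≠ 0) (x : n → 𝕜) :
    invNormSq (c • (1 : Matrix n n 𝕜)) x = RCLike.re (star x ⬝ᵥ x) / c := by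
  have hinv : (c • (1 : Matrix n n 𝕜))⁻¹ = c⁻¹ • 1 :=
    inv_eq_left_inv (by simp [smul_smul, hc])
  rw [invNormSq, hinv, smul_mulVec, one_mulVec, dotProduct_smul, RCLike.smul_re, inv_mul_eq_div]

theorem re_det_add_vecMulVec_star (hA : A.PosDef) (x : n → 𝕜) :
    RCLike.re (A + vecMulVec x (star x)).det = RCLike.re A.det * (1 + invNormSq A x) := by
  rw [det_add_vecMulVec ((isUnit_iff_isUnit_det A).1 hA.isUnit), ← ofReal_invNormSq hA.1,
    ← RCLike.ofReal_one, ← RCLike.ofReal_add, RCLike.re_mul_ofReal]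

end PositiveMatrices

section DesignMatrix

variable {n R : Type*} [CommSemiring R] [Star R]

/-- The regularised design matrix `Γ t = A + ∑_{s < t} X_s X_sᴴ` of the vectors `X`, in closed form
rather than by recursion on `t`. -/
def designMatrix (A : Matrix n n R) (X : ℕ → n → R) (t : ℕ) : Matrix n n R :=
  A + ∑ s ∈ range t, vecMulVec (X s) (star (X s))

theorem designMatrix_zero (A : Matrix n n R) (X : ℕ → n → R) : designMatrix A X 0 = A := by
  simp [designMatrix]

theorem designMatrix_succ (A : Matrix n n R) (X : ℕ → n → R) (t : ℕ) :
    designMatrix A X (t + 1) = designMatrix A X t + vecMulVec (X t) (star (X t)) := by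
  rw [designMatrix, sum_range_succ, ← add_assoc, ← designMatrix]

theorem eq_designMatrix_of_zero_of_succ {A : Matrix n n R} {Γ : ℕ → Matrix n n R}
    {X : ℕ → n → R} (hΓ0 : Γ 0 = A)
    (hΓ : ∀ t, Γ (t + 1) = Γ t + vecMulVec (X t) (star (X t))) (t : ℕ) :
    Γ t = designMatrix A X t := by
  induction t with
  | zero => rw [hΓ0, designMatrix_zero]
  | succ t ih => rw [hΓ, designMatrix_succ, ← ih]

theorem trace_designMatrix [Fintype n] (A : Matrix n n R) (X : ℕ → n → R) (t : ℕ) :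
    (designMatrix A X t).trace = A.trace + ∑ s ∈ range t, star (X s) ⬝ᵥ X s := by
  simp only [designMatrix, trace_add, trace_sum, trace_vecMulVec, dotProduct_comm]

end DesignMatrix

section PositiveDesignMatrix

variable {n R : Type*} [Finite n] [CommRing R] [PartialOrder R] [StarRing R] [StarOrderedRing R]
  {A : Matrix n n R}

theorem posSemidef_designMatrix_sub (A : Matrix n n R) (X : ℕ → n → R) (t : ℕ) :
    (designMatrix A X t - A).PosSemidef := by
  rw [designMatrix, add_sub_cancel_left]
  exact posSemidef_sum _ fun s _ => posSemidef_vecMulVec_self_star (X s)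

theorem posSemidef_designMatrix (hA : A.PosSemidef) (X : ℕ → n → R) (t : ℕ) :
    (designMatrix A X t).PosSemidef := by
  simpa using hA.add (posSemidef_designMatrix_sub A X t)

theorem posDef_designMatrix (hA : A.PosDef) (X : ℕ → n → R) (t : ℕ) :
    (designMatrix A X t).PosDef := by
  simpa using hA.add_posSemidef (posSemidef_designMatrix_sub A X t)

end PositiveDesignMatrix

section EllipticalPotential

open scoped ComplexOrder

variable {n 𝕜 : Type*} [RCLike 𝕜] [Fintype n] [DecidableEq n] (X : ℕ → n → 𝕜)

theorem re_det_designMatrix {A : Matrix n n 𝕜} (hA : A.PosDef) (t : ℕ) :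
    RCLike.re (designMatrix A X t).det =
      RCLike.re A.det * ∏ s ∈ range t, (1 + invNormSq (designMatrix A X s) (X s)) := by
  induction t with
  | zero => simp [designMatrix_zero]
  | succ t ih =>
    rw [designMatrix_succ, re_det_add_vecMulVec_star (posDef_designMatrix hA X t), ih,
      prod_range_succ, mul_assoc]

theorem prod_one_add_invNormSq_designMatrix_le [Nonempty n] {c r : ℝ} (hc : 0 < c) {T : ℕ}
    (hX : ∀ t < T, RCLike.re (star (X t) ⬝ᵥ X t) ≤ r) :
    ∏ t ∈ range T, (1 + invNormSq (designMatrix (c • 1) X t) (X t)) ≤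
      (1 + T * r / (Fintype.card n * c)) ^ Fintype.card n := by
  have hpd : (c • (1 : Matrix n n 𝕜)).PosDef := PosDef.one.smul hc
  have hdet : RCLike.re (c • (1 : Matrix n n 𝕜)).det = c ^ Fintype.card n := by
    rw [det_smul_of_tower, det_one, RCLike.smul_re, RCLike.one_re, mul_one]
  have htrace : RCLike.re (designMatrix (c • 1) X T).trace ≤ Fintype.card n * c + T * r := by
    have hsum : ∑ t ∈ range T, RCLike.re (star (X t) ⬝ᵥ X t) ≤ T * r := by
      simpa using sum_le_card_nsmul (range T) _ r fun t ht => hX t (mem_range.1 ht)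
    rw [trace_designMatrix, trace_smul, trace_one, map_add, RCLike.smul_re, RCLike.natCast_re,
      mul_comm c, map_sum]
    gcongr
  have htrace_nonneg : 0 ≤ RCLike.re (designMatrix (c • 1) X T).trace :=
    (RCLike.nonneg_iff.1 (posSemidef_designMatrix hpd.posSemidef X T).trace_nonneg).1
  refine le_of_mul_le_mul_left ?_ (pow_pos hc (Fintype.card n))
  calc c ^ Fintype.card n * ∏ t ∈ range T, (1 + invNormSq (designMatrix (c • 1) X t) (X t))
      = RCLike.re (designMatrix (c • 1) X T).det := by rw [re_det_designMatrix X hpd, hdet]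
    _ ≤ (RCLike.re (designMatrix (c • 1) X T).trace / Fintype.card n) ^ Fintype.card n :=
      re_det_le_re_trace_div_card_pow (posSemidef_designMatrix hpd.posSemidef X T)
    _ ≤ ((Fintype.card n * c + T * r) / Fintype.card n) ^ Fintype.card n := by gcongr
    _ = c ^ Fintype.card n * (1 + T * r / (Fintype.card n * c)) ^ Fintype.card n := by
      rw [← mul_pow]
      field_simp

theorem invNormSq_designMatrix_smul_one_le {c : ℝ} (hc : 0 < c) (t : ℕ) (x : n → 𝕜) :
    invNormSq (designMatrix (c • 1) X t) x ≤ RCLike.re (star x ⬝ᵥ x) / c := by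
  rw [← invNormSq_smul_one hc.ne']
  exact invNormSq_anti (PosDef.one.smul hc) (posSemidef_designMatrix_sub _ X t) x

theorem sum_invNormSq_designMatrix_le [Nonempty n] {c r : ℝ} (hc : 0 < c) {T : ℕ}
    (hX : ∀ t < T, RCLike.re (star (X t) ⬝ᵥ X t) ≤ r) :
    ∑ t ∈ range T, invNormSq (designMatrix (c • 1) X t) (X t) ≤
      (1 + r / c) * (Fintype.card n * Real.log (1 + T * r / (Fintype.card n * c))) := by
  rcases T.eq_zero_or_pos with rfl | hT
  · simp
  have hr : 0 ≤ r := (RCLike.nonneg_iff.1 (dotProduct_star_self_nonneg (X 0))).1.trans (hX 0 hT)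
  have hnonneg (t : ℕ) : 0 ≤ invNormSq (designMatrix (c • 1) X t) (X t) :=
    invNormSq_nonneg (posSemidef_designMatrix (PosSemidef.one.smul hc.le) X t) (X t)
  have hle : ∀ t ∈ range T, invNormSq (designMatrix (c • 1) X t) (X t) ≤ r / c := fun t ht =>
    (invNormSq_designMatrix_smul_one_le X hc t (X t)).trans <| by
      gcongr
      exact hX t (mem_range.1 ht)
  have hprod_pos : 0 < ∏ t ∈ range T, (1 + invNormSq (designMatrix (c • 1) X t) (X t)) :=
    prod_pos fun t _ => add_pos_of_pos_of_nonneg one_pos (hnonneg t)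
  calc ∑ t ∈ range T, invNormSq (designMatrix (c • 1) X t) (X t)
      ≤ (1 + r / c) *
          Real.log (∏ t ∈ range T, (1 + invNormSq (designMatrix (c • 1) X t) (X t))) :=
        sum_le_one_add_mul_log_prod_one_add (fun t _ => hnonneg t) hle
    _ ≤ (1 + r / c) * Real.log ((1 + T * r / (Fintype.card n * c)) ^ Fintype.card n) := by
        gcongr
        exact prod_one_add_invNormSq_designMatrix_le X hc hX
    _ = _ := by rw [Real.log_pow]

theorem sum_sqrt_invNormSq_designMatrix_le [Nonempty n] {c r : ℝ} (hc : 0 < c) {T : ℕ}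
    (hX : ∀ t < T, RCLike.re (star (X t) ⬝ᵥ X t) ≤ r) :
    ∑ t ∈ range T, √(invNormSq (designMatrix (c • 1) X t) (X t)) ≤
      √(T * Fintype.card n * (1 + r / c) * Real.log (1 + T * r / (Fintype.card n * c))) := by
  have hnonneg (t : ℕ) : 0 ≤ invNormSq (designMatrix (c • 1) X t) (X t) :=
    invNormSq_nonneg (posSemidef_designMatrix (PosSemidef.one.smul hc.le) X t) (X t)
  calc ∑ t ∈ range T, √(invNormSq (designMatrix (c • 1) X t) (X t))
      ≤ √(T * ∑ t ∈ range T, invNormSq (designMatrix (c • 1) X t) (X t)) := by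
        simpa using sum_sqrt_le_sqrt_card_mul_sum (s := range T) fun t _ => hnonneg t
    _ ≤ √(T * ((1 + r / c) *
          (Fintype.card n * Real.log (1 + T * r / (Fintype.card n * c))))) := by
        gcongr
        exact sum_invNormSq_designMatrix_le X hc hX
    _ = _ := by congr 1; ring

end EllipticalPotential

theorem stmt_8_general {n 𝕜 : Type*} [RCLike 𝕜] [Fintype n] [DecidableEq n] [Nonempty n] (T : ℕ)
    {c r : ℝ} (hc : 0 < c) (X : ℕ → n → 𝕜) (hX : ∀ t < T, RCLike.re (star (X t) ⬝ᵥ X t) ≤ r)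
    (Γ : ℕ → Matrix n n 𝕜) (hΓ0 : Γ 0 = c • (1 : Matrix n n 𝕜))
    (hΓ : ∀ t, Γ (t + 1) = Γ t + vecMulVec (X t) (star (X t))) :
    ∑ t ∈ range T, √(RCLike.re ((Γ t)⁻¹ * vecMulVec (X t) (star (X t))).trace) ≤
      √(T * Fintype.card n * (1 + r / c) * Real.log (1 + T * r / (Fintype.card n * c))) := by
  simp only [eq_designMatrix_of_zero_of_succ hΓ0 hΓ, trace_mul_vecMulVec]
  exact sum_sqrt_invNormSq_designMatrix_le X hc hX

/-- **Potential argument.**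
Let `X₁, …, X_T ∈ ℝ^d` with `‖X_t‖₂ ≤ 1`, let `λ > 0`, and define `Γ₁ = λI`,
`Γ_{t+1} = Γ_t + X_t X_tᵀ`.  Then
`∑_{t=1}^T √(tr(Γ_t⁻¹ X_t X_tᵀ)) ≤ √(T d (1 + 1/λ) log(1 + T/(dλ)))`.
(Indices are shifted so that rounds are `0, …, T−1` and `Γ 0 = λI`.) -/
theorem stmt_8 {d : ℕ} (hd : 0 < d) (T : ℕ) (lam : ℝ) (hlam : 0 < lam)
    (X : ℕ → (Fin d → ℝ)) (hX : ∀ t, Real.sqrt (X t ⬝ᵥ X t) ≤ 1)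
    (Γ : ℕ → Matrix (Fin d) (Fin d) ℝ)
    (hΓ0 : Γ 0 = lam • (1 : Matrix (Fin d) (Fin d) ℝ))
    (hΓ : ∀ t, Γ (t + 1) = Γ t + vecMulVec (X t) (X t)) :
    ∑ t ∈ Finset.range T, Real.sqrt (((Γ t)⁻¹ * vecMulVec (X t) (X t)).trace) ≤
      Real.sqrt (T * d * (1 + 1 / lam) * Real.log (1 + T / (d * lam))) := by
  have : Nonempty (Fin d) := Fin.pos_iff_nonempty.1 hd
  simpa using
    stmt_8_general T (r := 1) hlam X (fun t _ => by simpa using hX t) Γ hΓ0 (by simpa using hΓ)
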